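/- Corner cone approximation: let R ⊆ S be (d+1)-dimensional polytopes sharing the vertex 0, and suppose pyramidal growth coincides with inclusion in dimension d. Then there exist finitely many points z₁,…,z_m ∈ S such that each conv(R ∪ {z₁,…,z_j}) is a pyramidal extension of conv(R ∪ {z₁,…,z_{j−1}}), and ℝ₊·conv(R ∪ {z₁,…,z_m}) = ℝ₊·S. -/

import Mathlib

open Set

noncomputable section

/-- A polytope: the convex hull of a finite set of points. -/
def IsPolytope {E : Type*} [AddCommGroup E] [Module ℝ E] (P : Set E) : Prop :=
  ∃ s : Finset E, P = convexHull ℝ (s : Set E)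

/-- The dimension of a set: the dimension of its affine hull. -/
def polyDim {E : Type*} [AddCommGroup E] [Module ℝ E] (P : Set E) : ℕ :=
  Module.finrank ℝ (affineSpan ℝ P).direction

/-- A facet: an exposed face of dimension one less. -/
def IsFacet {E : Type*} [NormedAddCommGroup E] [NormedSpace ℝ E] (F P : Set E) : Prop :=
  IsExposed ℝ P F ∧ polyDim F + 1 = polyDim P

/-- `Δ` is a pyramid with base the polytope `B` and apex `v`. -/
def IsPyramidOver {E : Type*} [AddCommGroup E] [Module ℝ E]
    (Δ B : Set E) (v : E) : Prop :=
  IsPolytope B ∧ v ∉ affineSpan ℝ B ∧ Δ = convexHull ℝ (B ∪ {v})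

/-- Pyramidal extension: `closure (Q \ P)` is a pyramid whose intersection with `P`
is a facet of it. -/
def PyramidalExt {E : Type*} [NormedAddCommGroup E] [NormedSpace ℝ E]
    (P Q : Set E) : Prop :=
  IsPolytope P ∧ IsPolytope Q ∧ P ⊆ Q ∧
    (∃ B v, IsPyramidOver (closure (Q \ P)) B v) ∧
    IsFacet (closure (Q \ P) ∩ P) (closure (Q \ P))

end

/-- The conical hull of a set. -/
def coneOf {E : Type*} [AddCommGroup E] [Module ℝ E] (T : Set E) : Set E :=
  {y | ∃ c : ℝ, 0 ≤ c ∧ ∃ x ∈ T, y = c • x}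

/-! Choose a linear form `h` which is positive on `S` away from the vertex `0`. Slicing the two
cones with `{h = 1}` gives polytopes of dimension at most `d`, so the smaller slice grows to the
larger one by pyramidal extensions, and it remains to lift these from the hyperplane to `R`.

Lifting needs extensions that adjoin a single point from which the polytope is seen through one
facet. If the apex `v` of the pyramid `Δ = closure (Q \ P)` is not in `P`, then the facet `Δ ∩ P`
is the base of `Δ` and adjoining `v` suffices. If `v ∈ P`, then `Δ ∩ P` is a pyramid with apex
`v` over a face of the base `B`. By induction on the dimension `B` grows from this face, enlarged
by any one further point of `B`, by single points. The same points may be adjoined to `P`: the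
union of `P` and `Δ` is convex, so every segment from `P` to `B` passes through `Δ ∩ P`.

A single-point extension of the slice by `z`, seen through the affine form `f`, lifts to the
extension of the solid polytope by `ε • z`, seen through the linear form `g` which agrees with
`f` on `{h = 1}`. Every vertex `x` satisfies `g (x + b • z) = 0` for some `b ≥ 0` with
`x + b • z` in the cone; for small `ε` the segment from `x` to `ε • z` meets the ray through
`x + b • z` so close to `0` that the meeting point lies in the polytope, and `x` is seen
through it. -/

section Shadow

variable {E : Type*} [AddCommGroup E] [Module ℝ E] {z p q : E} {C D P : Set E}
  {f g : E →ᵃ[ℝ] ℝ}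

/-- The shadow cast by `D` in the light of a lamp at `z`: the points `z + r • (q - z)` with `q ∈ D`
and `1 ≤ r`. -/
def shadow (z : E) (D : Set E) : Set E :=
  {p | ∃ q ∈ D, ∃ r : ℝ, 1 ≤ r ∧ AffineMap.lineMap z q r = p}

theorem subset_shadow : D ⊆ shadow z D :=
  fun q hq => ⟨q, hq, 1, le_rfl, AffineMap.lineMap_apply_one z q⟩

theorem shadow_mono (h : C ⊆ D) : shadow z C ⊆ shadow z D :=
  fun _ ⟨q, hq, hr⟩ => ⟨q, h hq, hr⟩

theorem shadow_shadow_subset : shadow z (shadow z D) ⊆ shadow z D := by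
  rintro _ ⟨_, ⟨q, hq, r, hr, rfl⟩, s, hs, rfl⟩
  refine ⟨q, hq, s * r, one_le_mul_of_one_le_of_one_le hs hr, ?_⟩
  simp only [AffineMap.lineMap_apply_module]
  module

theorem convex_shadow (hD : Convex ℝ D) : Convex ℝ (shadow z D) := by
  rintro _ ⟨q₁, hq₁, r₁, hr₁, rfl⟩ _ ⟨q₂, hq₂, r₂, hr₂, rfl⟩ a b ha hb hab
  have hr : 1 ≤ a * r₁ + b * r₂ := by nlinarith
  refine ⟨(a * r₁ / (a * r₁ + b * r₂)) • q₁ + (b * r₂ / (a * r₁ + b * r₂)) • q₂,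
    hD hq₁ hq₂ (by positivity) (by positivity) (by field_simp), a * r₁ + b * r₂, hr, ?_⟩
  simp only [AffineMap.lineMap_apply_module]
  match_scalars <;> field_simp
  linear_combination -hab

theorem mem_shadow_of_mem_segment (hq : q ∈ D) (hqp : q ∈ segment ℝ p z) (hqz : q ≠ z) :
    p ∈ shadow z D := by
  rw [segment_symm, segment_eq_image_lineMap] at hqp
  obtain ⟨t, ht, rfl⟩ := hqp
  have ht0 : t ≠ 0 := by
    rintro rfl
    exact hqz (AffineMap.lineMap_apply_zero z p)
  refine ⟨_, hq, t⁻¹, (one_le_inv₀ (ht.1.lt_of_ne' ht0)).2 ht.2, ?_⟩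
  simp only [AffineMap.lineMap_apply_module]
  match_scalars <;> field_simp
  ring

/-- `P` is seen from `z` through the wall `{f = 0}`: the point `z` lies strictly on the positive
side of the wall and the part of the wall inside `P` hides all of `P` from `z`. -/
def IsSeenThrough (f : E →ᵃ[ℝ] ℝ) (z : E) (P : Set E) : Prop :=
  0 < f z ∧ P ⊆ shadow z (P ∩ f ⁻¹' {0})

namespace IsSeenThrough

theorem of_map_eq_zero (hz : 0 < f z) (hP : ∀ p ∈ P, f p = 0) : IsSeenThrough f z P :=
  ⟨hz, fun _ hp => subset_shadow ⟨hp, hP _ hp⟩⟩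

theorem congr (h : IsSeenThrough f z P) (hfg : EqOn f g (insert z P)) : IsSeenThrough g z P := by
  refine ⟨hfg (mem_insert z P) ▸ h.1, h.2.trans (shadow_mono fun q hq => ⟨hq.1, ?_⟩)⟩
  exact (hfg (mem_insert_of_mem z hq.1)).symm.trans hq.2

theorem map_nonpos (h : IsSeenThrough f z P) (hp : p ∈ P) : f p ≤ 0 := by
  obtain ⟨q, ⟨-, hq⟩, r, hr, rfl⟩ := h.2 hp
  rw [AffineMap.apply_lineMap, mem_singleton_iff.1 hq, AffineMap.lineMap_apply_module]
  simpa using mul_nonpos_of_nonpos_of_nonneg (sub_nonpos.2 hr) h.1.le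

theorem of_subset_shadow (hz : 0 < f z) (hC : C ⊆ shadow z (convexHull ℝ C ∩ f ⁻¹' {0})) :
    IsSeenThrough f z (convexHull ℝ C) :=
  ⟨hz, convexHull_min hC <| convex_shadow <|
    (convex_convexHull ℝ C).inter ((convex_singleton 0).affine_preimage f)⟩

theorem union (h : IsSeenThrough f z C) (hP : ∀ p ∈ P, ∃ q ∈ C, q ∈ segment ℝ p z) :
    IsSeenThrough f z (convexHull ℝ (P ∪ C)) := by
  refine .of_subset_shadow h.1 (Subset.trans ?_ <| shadow_mono <| inter_subset_inter_left _ <|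
    subset_union_right.trans (subset_convexHull ℝ (P ∪ C)))
  refine union_subset (fun p hp => ?_) h.2
  obtain ⟨q, hqC, hqs⟩ := hP p hp
  have hqz : q ≠ z := by
    rintro rfl
    exact h.1.not_ge (h.map_nonpos hqC)
  exact shadow_shadow_subset (shadow_mono h.2 (mem_shadow_of_mem_segment hqC hqs hqz))

theorem insert_apex (h : IsSeenThrough f z P) {v : E} (hv : f v = 0) :
    IsSeenThrough f z (convexHull ℝ (insert v P)) := by
  refine .of_subset_shadow h.1 (insert_subset ?_ (h.2.trans (shadow_mono ?_)))
  · exact subset_shadow ⟨subset_convexHull ℝ _ (mem_insert v P), hv⟩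
  · exact inter_subset_inter_left _ ((subset_insert v P).trans (subset_convexHull ℝ _))

end IsSeenThrough

end Shadow

section Faces

variable {E : Type*} [AddCommGroup E] [Module ℝ E] {A C P : Set E} {f : E →ᵃ[ℝ] ℝ}

theorem convexHull_insert_convexHull (x : E) (A : Set E) :
    convexHull ℝ (insert x (convexHull ℝ A)) = convexHull ℝ (insert x A) := by
  rw [insert_eq, convexHull_convexHull_union_right, ← insert_eq]

theorem union_convexHull_of_convex (h : Convex ℝ (P ∪ convexHull ℝ A)) :
    P ∪ convexHull ℝ A = convexHull ℝ (P ∪ A) := by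
  rw [← convexHull_convexHull_union_right, h.convexHull_eq]

theorem mem_convexHull_insert_iff (hC : Convex ℝ C) (hne : C.Nonempty) {z x : E} :
    x ∈ convexHull ℝ (insert z C) ↔
      ∃ p ∈ C, ∃ t ∈ Icc (0 : ℝ) 1, AffineMap.lineMap z p t = x := by
  simp [convexHull_insert hne, hC.convexHull_eq, segment_eq_image_lineMap]

theorem convex_pos_union (hC : Convex ℝ C) (hf : ∀ x ∈ C, 0 ≤ f x) :
    Convex ℝ ({x | 0 < f x} ∪ C) := by
  rw [convex_iff_forall_pos]
  rintro x hx y hy a b ha hb hab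
  have hfx : 0 ≤ f x := hx.elim (fun h => le_of_lt h) (hf x)
  have hfy : 0 ≤ f y := hy.elim (fun h => le_of_lt h) (hf y)
  have hfxy : f (a • x + b • y) = a * f x + b * f y := Convex.combo_affine_apply hab
  rcases hx with hx | hx
  · refine .inl (lt_of_lt_of_eq ?_ hfxy.symm)
    exact add_pos_of_pos_of_nonneg (mul_pos ha hx) (mul_nonneg hb.le hfy)
  rcases hy with hy | hy
  · refine .inl (lt_of_lt_of_eq ?_ hfxy.symm)
    exact add_pos_of_nonneg_of_pos (mul_nonneg ha.le hfx) (mul_pos hb hy)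
  · exact .inr (hC hx hy ha.le hb.le hab)

theorem convexHull_inter_zero (hf : ∀ x ∈ A, 0 ≤ f x) :
    convexHull ℝ A ∩ f ⁻¹' {0} = convexHull ℝ (A ∩ f ⁻¹' {0}) := by
  have hzero : Convex ℝ (f ⁻¹' {0}) := (convex_singleton 0).affine_preimage f
  have hface : convexHull ℝ (A ∩ f ⁻¹' {0}) ⊆ f ⁻¹' {0} := convexHull_min inter_subset_right hzero
  refine Subset.antisymm ?_ (subset_inter (convexHull_mono inter_subset_left) hface)
  have hA : convexHull ℝ A ⊆ {x | 0 < f x} ∪ convexHull ℝ (A ∩ f ⁻¹' {0}) := by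
    refine convexHull_min (fun x hx => ?_)
      (convex_pos_union (convex_convexHull ℝ _) fun x hx => (hface hx).ge)
    exact (hf x hx).lt_or_eq.imp id fun h => subset_convexHull ℝ _ ⟨hx, h.symm⟩
  rintro x ⟨hx, hx0⟩
  exact (hA hx).resolve_left fun h => h.ne' hx0

theorem convexHull_insert_inter_zero (hC : Convex ℝ C) {v : E} (hf : ∀ x ∈ insert v C, 0 ≤ f x)
    (hv : f v ≠ 0) : convexHull ℝ (insert v C) ∩ f ⁻¹' {0} = C ∩ f ⁻¹' {0} := by
  have hCz : Convex ℝ (C ∩ f ⁻¹' {0}) := hC.inter ((convex_singleton 0).affine_preimage f)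
  have hvz : v ∉ f ⁻¹' {0} := hv
  rw [convexHull_inter_zero hf, insert_inter_of_notMem hvz, hCz.convexHull_eq]

theorem convexHull_nonneg (hf : ∀ x ∈ A, 0 ≤ f x) {x : E} (hx : x ∈ convexHull ℝ A) : 0 ≤ f x :=
  convexHull_min hf ((convex_Ici 0).affine_preimage f) hx

theorem map_eq_zero_of_mem_affineSpan (hf : ∀ x ∈ A, f x = 0) {x : E}
    (hx : x ∈ affineSpan ℝ A) : f x = 0 :=
  AffineMap.eqOn_affineSpan (g := 0) hf hx

theorem exists_affineMap_eq_one_eq_zero {A : AffineSubspace ℝ E} {v : E} (hv : v ∉ A) :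
    ∃ f : E →ᵃ[ℝ] ℝ, f v = 1 ∧ ∀ x ∈ A, f x = 0 := by
  rcases A.eq_bot_or_nonempty with rfl | ⟨b, hb⟩
  · exact ⟨AffineMap.const ℝ E 1, rfl, fun x hx => hx.elim⟩
  have hvb : v -ᵥ b ∉ A.direction :=
    fun h => hv ((AffineSubspace.vsub_right_mem_direction_iff_mem hb v).1 h)
  obtain ⟨φ, hφv, hφA⟩ := Submodule.exists_le_ker_of_notMem hvb
  refine ⟨(φ (v -ᵥ b))⁻¹ • (φ.toAffineMap - AffineMap.const ℝ E (φ b)), ?_, fun x hx => ?_⟩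
  · simpa using inv_mul_cancel₀ hφv
  · have : φ (x -ᵥ b) = 0 := hφA (AffineSubspace.vsub_mem_direction hx hb)
    simpa using Or.inr this

end Faces

section Polytope

variable {E : Type*} [AddCommGroup E] [Module ℝ E] {P : Set E}

theorem IsPolytope.convex (h : IsPolytope P) : Convex ℝ P := by
  obtain ⟨s, rfl⟩ := h
  exact convex_convexHull ℝ _

theorem IsPolytope.convexHull_insert (h : IsPolytope P) (z : E) :
    IsPolytope (convexHull ℝ (insert z P)) := by
  classical
  obtain ⟨s, rfl⟩ := h
  exact ⟨insert z s, by rw [Finset.coe_insert, convexHull_insert_convexHull]⟩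

theorem IsPolytope.inter_zero (h : IsPolytope P) {f : E →ᵃ[ℝ] ℝ} (hf : ∀ x ∈ P, 0 ≤ f x) :
    IsPolytope (P ∩ f ⁻¹' {0}) := by
  classical
  obtain ⟨s, rfl⟩ := h
  refine ⟨s.filter (f · = 0), ?_⟩
  rw [convexHull_inter_zero fun x hx => hf x (subset_convexHull ℝ _ hx), Finset.coe_filter]
  rfl

theorem IsPolytope.isClosed {E : Type*} [NormedAddCommGroup E] [NormedSpace ℝ E] {P : Set E}
    (h : IsPolytope P) : IsClosed P := by
  obtain ⟨s, rfl⟩ := h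
  exact (s.finite_toSet.isCompact_convexHull ℝ).isClosed

end Polytope

section Dimension

variable {E : Type*} [AddCommGroup E] [Module ℝ E] [FiniteDimensional ℝ E] {A B : Set E}

theorem polyDim_le_of_subset_affineSpan (h : A ⊆ affineSpan ℝ B) : polyDim A ≤ polyDim B :=
  Submodule.finrank_mono (AffineSubspace.direction_le (affineSpan_le.2 h))

theorem polyDim_mono (h : A ⊆ B) : polyDim A ≤ polyDim B :=
  polyDim_le_of_subset_affineSpan (h.trans (subset_affineSpan ℝ B))

theorem affineSpan_eq_of_polyDim_le (h : A ⊆ B) (hA : A.Nonempty) (hd : polyDim B ≤ polyDim A) :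
    affineSpan ℝ A = affineSpan ℝ B :=
  AffineSubspace.eq_of_direction_eq_of_nonempty_of_le
    (Submodule.eq_of_le_of_finrank_le (AffineSubspace.direction_le (affineSpan_mono ℝ h)) hd)
    ((affineSpan_nonempty ℝ).2 hA) (affineSpan_mono ℝ h)

theorem polyDim_convexHull_insert (hB : B.Nonempty) {v : E} (hv : v ∉ affineSpan ℝ B) :
    polyDim (convexHull ℝ (insert v B)) = polyDim B + 1 := by
  obtain ⟨b, hb⟩ := hB
  have hbB : b ∈ affineSpan ℝ B := subset_affineSpan ℝ B hb
  have hvb : v -ᵥ b ∉ (affineSpan ℝ B).direction :=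
    fun h => hv ((AffineSubspace.vsub_right_mem_direction_iff_mem hbB v).1 h)
  have hvb0 : v -ᵥ b ≠ 0 := fun h => hvb (h ▸ zero_mem _)
  have hdisj : Disjoint (ℝ ∙ (v -ᵥ b)) (affineSpan ℝ B).direction :=
    ((Submodule.disjoint_span_singleton' hvb0).2 hvb).symm
  have hsum := Submodule.finrank_sup_add_finrank_inf_eq (ℝ ∙ (v -ᵥ b)) (affineSpan ℝ B).direction
  rw [hdisj.eq_bot, finrank_bot, finrank_span_singleton hvb0, add_zero] at hsum
  rw [polyDim, affineSpan_convexHull, ← affineSpan_insert_affineSpan,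
    AffineSubspace.direction_affineSpan_insert hbB, hsum, polyDim, add_comm]

end Dimension

section Facet

variable {E : Type*} [NormedAddCommGroup E] [NormedSpace ℝ E] [FiniteDimensional ℝ E]
  {A B F : Set E} {v : E}

theorem isExposed_iff_exists_affineMap (hF : F.Nonempty) :
    IsExposed ℝ A F ↔ ∃ f : E →ᵃ[ℝ] ℝ, (∀ x ∈ A, 0 ≤ f x) ∧ F = A ∩ f ⁻¹' {0} := by
  constructor
  · intro h
    obtain ⟨l, rfl⟩ := h hF
    obtain ⟨q, hqA, hq⟩ := hF
    refine ⟨AffineMap.const ℝ E (l q) - l.toLinearMap.toAffineMap, fun x hx => ?_, ?_⟩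
    · simpa using hq x hx
    · ext x
      simp only [mem_ofPred_eq, mem_inter_iff, mem_preimage, mem_singleton_iff]
      refine and_congr_right fun hx => ⟨fun h => ?_, fun h y hy => ?_⟩
      · simpa [sub_eq_zero] using le_antisymm (h q hqA) (hq x hx)
      · exact (hq y hy).trans_eq (by simpa [sub_eq_zero] using h)
  · rintro ⟨f, hf, rfl⟩ ⟨q, hqA, hq⟩
    have hl (x y : E) : -f.linear x ≤ -f.linear y ↔ f y ≤ f x := by
      rw [neg_le_neg_iff, AffineMap.decomp' f]
      simp
    refine ⟨LinearMap.toContinuousLinearMap (-f.linear), ?_⟩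
    ext x
    simp only [mem_ofPred_eq, mem_inter_iff, mem_preimage, mem_singleton_iff,
      LinearMap.coe_toContinuousLinearMap', LinearMap.neg_apply, hl]
    refine and_congr_right fun hx => ⟨fun h y hy => h ▸ hf y hy, fun h => ?_⟩
    exact le_antisymm ((h q hqA).trans_eq hq) (hf x hx)

theorem isFacet_convexHull_insert (hB : Convex ℝ B) (hne : B.Nonempty)
    (hv : v ∉ affineSpan ℝ B) : IsFacet B (convexHull ℝ (insert v B)) := by
  refine ⟨(isExposed_iff_exists_affineMap hne).2 ?_, (polyDim_convexHull_insert hne hv).symm⟩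
  obtain ⟨f, hfv, hfB⟩ := exists_affineMap_eq_one_eq_zero hv
  have hB0 : ∀ x ∈ B, f x = 0 := fun x hx => hfB x (subset_affineSpan ℝ B hx)
  have hpos : ∀ x ∈ insert v B, 0 ≤ f x :=
    forall_mem_insert.2 ⟨hfv ▸ zero_le_one, fun x hx => (hB0 x hx).ge⟩
  refine ⟨f, fun x => convexHull_nonneg hpos, ?_⟩
  rw [convexHull_insert_inter_zero hB hpos (hfv ▸ one_ne_zero)]
  exact (inter_eq_left.2 hB0).symm

theorem IsFacet.eq_base_of_apex_notMem (hF : IsFacet F (convexHull ℝ (insert v B)))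
    (hne : F.Nonempty) (hvF : v ∉ F) (hB : Convex ℝ B) (hv : v ∉ affineSpan ℝ B) : F = B := by
  obtain ⟨f, hf, rfl⟩ := (isExposed_iff_exists_affineMap hne).1 hF.1
  have hfA : ∀ x ∈ insert v B, 0 ≤ f x := fun x hx => hf x (subset_convexHull ℝ _ hx)
  have hvf : f v ≠ 0 := fun h => hvF ⟨subset_convexHull ℝ _ (mem_insert v B), h⟩
  rw [convexHull_insert_inter_zero hB hfA hvf] at hF hne ⊢
  have hdim : polyDim B ≤ polyDim (B ∩ f ⁻¹' {0}) := by
    have := hF.2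
    rw [polyDim_convexHull_insert (hne.mono inter_subset_left) hv] at this
    exact (Nat.succ_injective this).ge
  have hspan := affineSpan_eq_of_polyDim_le inter_subset_left hne hdim
  exact inter_eq_left.2 fun x hx => map_eq_zero_of_mem_affineSpan (A := B ∩ f ⁻¹' {0})
    (fun y hy => hy.2) (hspan ▸ subset_affineSpan ℝ B hx)

end Facet

section PointExtension

variable {E : Type*} [NormedAddCommGroup E] [NormedSpace ℝ E] {f : E →ᵃ[ℝ] ℝ}
  {P : Set E} {z : E}

namespace IsSeenThrough

theorem nonempty_wall (h : IsSeenThrough f z P) (hne : P.Nonempty) :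
    (P ∩ f ⁻¹' {0}).Nonempty :=
  let ⟨_, hp⟩ := hne
  let ⟨q, hq, _⟩ := h.2 hp
  ⟨q, hq⟩

theorem isPolytope_wall (h : IsSeenThrough f z P) (hP : IsPolytope P) :
    IsPolytope (P ∩ f ⁻¹' {0}) := by
  have hneg : (-f) ⁻¹' {0} = f ⁻¹' {0} := by
    ext x
    simp
  exact hneg ▸ hP.inter_zero (f := -f) fun x hx => neg_nonneg.2 (h.map_nonpos hx)

theorem notMem_affineSpan_wall (h : IsSeenThrough f z P) :
    z ∉ affineSpan ℝ (P ∩ f ⁻¹' {0}) :=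
  fun hz => h.1.ne' (map_eq_zero_of_mem_affineSpan (fun _ hx => hx.2) hz)

theorem convexHull_insert_sdiff_subset (h : IsSeenThrough f z P) (hP : Convex ℝ P)
    (hne : P.Nonempty) :
    convexHull ℝ (insert z P) \ P ⊆ convexHull ℝ (insert z (P ∩ f ⁻¹' {0})) := by
  rintro x ⟨hx, hxP⟩
  obtain ⟨p, hp, s, hs, rfl⟩ := (mem_convexHull_insert_iff hP hne).1 hx
  obtain ⟨q, hq, r, hr, rfl⟩ := h.2 hp
  have hrs : AffineMap.lineMap z (AffineMap.lineMap z q r) s = AffineMap.lineMap z q (s * r) := by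
    simp only [AffineMap.lineMap_apply_module]
    module
  rw [hrs] at hxP ⊢
  have hsr0 : 0 ≤ s * r := mul_nonneg hs.1 (zero_le_one.trans hr)
  refine (mem_convexHull_insert_iff (hP.inter ((convex_singleton 0).affine_preimage f)) ⟨q, hq⟩).2
    ⟨q, hq, s * r, ⟨hsr0, not_lt.1 fun hsr1 => hxP ?_⟩, rfl⟩
  have hseg : AffineMap.lineMap z q (s * r) ∈ segment ℝ q (AffineMap.lineMap z q r) := by
    have hIcc : s * r ∈ Icc 1 r := ⟨hsr1.le, mul_le_of_le_one_left (zero_le_one.trans hr) hs.2⟩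
    simpa [← segment_eq_Icc hr, image_segment] using mem_image_of_mem (AffineMap.lineMap z q) hIcc
  exact hP.segment_subset hq.1 hp hseg

theorem closure_convexHull_insert_sdiff (h : IsSeenThrough f z P) (hP : IsPolytope P)
    (hne : P.Nonempty) :
    closure (convexHull ℝ (insert z P) \ P) = convexHull ℝ (insert z (P ∩ f ⁻¹' {0})) := by
  have hwall := h.isPolytope_wall hP
  refine Subset.antisymm (closure_minimal (h.convexHull_insert_sdiff_subset hP.convex hne)
    (hwall.convexHull_insert z).isClosed) fun x hx => ?_
  obtain ⟨q, hq, t, ht, rfl⟩ :=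
    (mem_convexHull_insert_iff hwall.convex (h.nonempty_wall hne)).1 hx
  have hopen : openSegment ℝ z q ⊆ convexHull ℝ (insert z P) \ P := by
    intro y hy
    refine ⟨(convex_convexHull ℝ _).openSegment_subset (subset_convexHull ℝ _ (mem_insert z P))
      (subset_convexHull ℝ _ (mem_insert_of_mem z hq.1)) hy, fun hyP => ?_⟩
    rw [openSegment_eq_image_lineMap] at hy
    obtain ⟨s, hs, rfl⟩ := hy
    have hfs : f (AffineMap.lineMap z q s) = (1 - s) * f z := by
      rw [AffineMap.apply_lineMap, mem_singleton_iff.1 hq.2, AffineMap.lineMap_apply_module]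
      simp
    exact (hfs ▸ mul_pos (sub_pos.2 hs.2) h.1).not_ge (h.map_nonpos hyP)
  refine closure_mono hopen (segment_subset_closure_openSegment ?_)
  rw [segment_eq_image_lineMap]
  exact mem_image_of_mem _ ht

theorem pyramidalExt [FiniteDimensional ℝ E] (h : IsSeenThrough f z P) (hP : IsPolytope P)
    (hne : P.Nonempty) : PyramidalExt P (convexHull ℝ (insert z P)) := by
  have hwall := h.isPolytope_wall hP
  have hface : convexHull ℝ (insert z (P ∩ f ⁻¹' {0})) ∩ P = P ∩ f ⁻¹' {0} := by
    refine Subset.antisymm (fun x hx => ⟨hx.2, (h.map_nonpos hx.2).antisymm ?_⟩) fun x hx =>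
      ⟨subset_convexHull ℝ _ (mem_insert_of_mem z hx), hx.1⟩
    exact convexHull_nonneg (forall_mem_insert.2 ⟨h.1.le, fun y hy => hy.2.ge⟩) hx.1
  refine ⟨hP, hP.convexHull_insert z, (subset_insert z P).trans (subset_convexHull ℝ _), ?_, ?_⟩
  · exact ⟨P ∩ f ⁻¹' {0}, z, hwall, h.notMem_affineSpan_wall, by
      rw [h.closure_convexHull_insert_sdiff hP hne, union_singleton]⟩
  · rw [h.closure_convexHull_insert_sdiff hP hne, hface]
    exact isFacet_convexHull_insert hwall.convex (h.nonempty_wall hne) h.notMem_affineSpan_wall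

end IsSeenThrough

end PointExtension

section PointChain

variable {E : Type*} [AddCommGroup E] [Module ℝ E] {f g : E →ᵃ[ℝ] ℝ} {B P Q X : Set E} {v w z : E}

/-- `Q` arises from `P` by adjoining one point from which `P` is seen through a wall. -/
def PointExt (P Q : Set E) : Prop :=
  ∃ z f, IsSeenThrough f z P ∧ Q = convexHull ℝ (insert z P)

theorem PointExt.subset (h : PointExt P Q) : P ⊆ Q := by
  obtain ⟨z, f, -, rfl⟩ := h
  exact (subset_insert z P).trans (subset_convexHull ℝ _)

theorem PointExt.subset_of_reflTransGen (h : Relation.ReflTransGen PointExt P Q) : P ⊆ Q :=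
  Relation.reflTransGen_le_of_le (r := (· ⊆ ·)) (fun _ _ => PointExt.subset) P Q h

theorem convexHull_union_eq_of_subset (hP : Convex ℝ P) (h : B ⊆ P) : convexHull ℝ (P ∪ B) = P := by
  rw [union_eq_left.2 h, hP.convexHull_eq]

theorem IsSeenThrough.exists_convexHull_insert {A : AffineSubspace ℝ E} (h : IsSeenThrough g z X)
    (hz : z ∈ A) (hX : X ⊆ A) (hv : v ∉ A) :
    ∃ f, IsSeenThrough f z (convexHull ℝ (insert v X)) := by
  obtain ⟨ψ, hψv, hψA⟩ := exists_affineMap_eq_one_eq_zero hv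
  refine ⟨g - g v • ψ, (h.congr fun x hx => ?_).insert_apex (by simp [hψv])⟩
  have hxA : x ∈ A := hx.elim (fun h => h ▸ hz) fun h => hX h
  simp [hψA x hxA]

theorem reflTransGen_pointExt_convexHull_union (hv : v ∉ affineSpan ℝ B) (hvP : v ∈ P)
    (h : Relation.ReflTransGen PointExt X B)
    (hmeet : ∀ z ∈ B, ∀ p ∈ P, ∃ q ∈ convexHull ℝ (insert v X), q ∈ segment ℝ p z) :
    Relation.ReflTransGen PointExt (convexHull ℝ (P ∪ X)) (convexHull ℝ (P ∪ B)) := by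
  induction h using Relation.ReflTransGen.head_induction_on with
  | refl => exact .refl
  | @head X Y hstep hchain ih =>
    have hYB := PointExt.subset_of_reflTransGen hchain
    have hXY := hstep.subset
    refine .head ?_ (ih fun z hz p hp => ?_)
    · obtain ⟨z, g, hg, rfl⟩ := hstep
      have hzB : z ∈ B := hYB (subset_convexHull ℝ _ (mem_insert z X))
      obtain ⟨f, hf⟩ := hg.exists_convexHull_insert (subset_affineSpan ℝ B hzB)
        ((hXY.trans hYB).trans (subset_affineSpan ℝ B)) hv
      have hPX : convexHull ℝ (P ∪ convexHull ℝ (insert v X)) = convexHull ℝ (P ∪ X) := by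
        rw [convexHull_convexHull_union_right, union_insert, insert_eq_of_mem (.inl hvP)]
      refine ⟨z, f, hPX ▸ hf.union (hmeet z hzB), ?_⟩
      rw [convexHull_insert_convexHull, convexHull_convexHull_union_right, union_insert]
    · obtain ⟨q, hq, hqs⟩ := hmeet z hz p hp
      exact ⟨q, convexHull_mono (insert_subset_insert hXY) hq, hqs⟩

theorem pointExt_of_base_subset (hv : v ∉ affineSpan ℝ B) (hP : Convex ℝ P) (hBP : B ⊆ P)
    (hmeet : ∀ p ∈ P, ∃ q ∈ B, q ∈ segment ℝ p v) : PointExt P (convexHull ℝ (insert v P)) := by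
  obtain ⟨f, hfv, hfB⟩ := exists_affineMap_eq_one_eq_zero hv
  have hB : IsSeenThrough f v B :=
    .of_map_eq_zero (hfv ▸ one_pos) fun x hx => hfB x (subset_affineSpan ℝ B hx)
  exact ⟨v, f, convexHull_union_eq_of_subset hP hBP ▸ hB.union hmeet, rfl⟩

theorem reflTransGen_pointExt_of_wall (hP : Convex ℝ P) (hv : v ∉ affineSpan ℝ B)
    (hvP : v ∈ P) (hfv : f v = 0) (hw : w ∈ B) (hfw : 0 < f w)
    (hFP : convexHull ℝ (insert v (B ∩ f ⁻¹' {0})) ⊆ P)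
    (hmeet : ∀ z ∈ B, ∀ p ∈ P, ∃ q ∈ convexHull ℝ (insert v (B ∩ f ⁻¹' {0})), q ∈ segment ℝ p z)
    (hB : Relation.ReflTransGen PointExt (convexHull ℝ (insert w (B ∩ f ⁻¹' {0}))) B) :
    Relation.ReflTransGen PointExt P (convexHull ℝ (P ∪ B)) := by
  set B' := B ∩ f ⁻¹' {0}
  have hB'P : B' ⊆ P := (subset_insert v B').trans (subset_convexHull ℝ _) |>.trans hFP
  have hfirst : IsSeenThrough f w P := by
    rw [← convexHull_union_eq_of_subset hP hFP]
    refine (IsSeenThrough.insert_apex ?_ hfv).union (hmeet w hw)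
    exact .of_map_eq_zero hfw fun x hx => hx.2
  have hunion : convexHull ℝ (P ∪ convexHull ℝ (insert w B')) = convexHull ℝ (insert w P) := by
    rw [convexHull_convexHull_union_right, union_insert, union_eq_left.2 hB'P]
  refine .head ⟨w, f, hfirst, rfl⟩ (hunion ▸ reflTransGen_pointExt_convexHull_union hv hvP hB ?_)
  intro z hz p hp
  obtain ⟨q, hq, hqs⟩ := hmeet z hz p hp
  refine ⟨q, convexHull_mono (insert_subset_insert ?_) hq, hqs⟩
  exact (subset_insert w B').trans (subset_convexHull ℝ _)

end PointChain

section PyramidalGrowth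

theorem union_closure_sdiff {α : Type*} [TopologicalSpace α] {P Q : Set α} (hPQ : P ⊆ Q)
    (hQ : IsClosed Q) : P ∪ closure (Q \ P) = Q :=
  Subset.antisymm (union_subset hPQ (closure_minimal sdiff_subset hQ)) <|
    (union_sdiff_cancel hPQ).symm.subset.trans (union_subset_union_right P subset_closure)

variable {E : Type*} [NormedAddCommGroup E] [NormedSpace ℝ E] {A B P Q : Set E} {v : E}

theorem PyramidalExt.subset_of_reflTransGen (h : Relation.ReflTransGen PyramidalExt P Q) :
    P ⊆ Q :=
  Relation.reflTransGen_le_of_le (r := (· ⊆ ·)) (fun _ _ h => h.2.2.1) P Q h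

theorem exists_mem_inter_segment (hA : IsClosed A) (hB : IsClosed B) (hAB : Convex ℝ (A ∪ B))
    {a b : E} (ha : a ∈ A) (hb : b ∈ B) : ∃ q ∈ A ∩ B, q ∈ segment ℝ a b := by
  obtain ⟨q, hq, hqAB⟩ := isPreconnected_closed_iff.1 (convex_segment a b).isPreconnected A B hA hB
    (hAB.segment_subset (.inl ha) (.inr hb)) ⟨a, left_mem_segment ℝ a b, ha⟩
    ⟨b, right_mem_segment ℝ a b, hb⟩
  exact ⟨q, hqAB, hq⟩

variable [FiniteDimensional ℝ E]

theorem reflTransGen_pointExt_of_apex_mem (hP : Convex ℝ P) (hB : IsPolytope B)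
    (hv : v ∉ affineSpan ℝ B) (hvP : v ∈ P)
    (hF : IsFacet (convexHull ℝ (insert v B) ∩ P) (convexHull ℝ (insert v B)))
    (hmeet : ∀ z ∈ B, ∀ p ∈ P, ∃ q ∈ convexHull ℝ (insert v B) ∩ P, q ∈ segment ℝ p z)
    (ih : polyDim B < polyDim (convexHull ℝ (insert v B)) → ∀ X ⊆ B, IsPolytope X → X.Nonempty →
      Relation.ReflTransGen PointExt X B) :
    Relation.ReflTransGen PointExt P (convexHull ℝ (P ∪ B)) := by
  have hBΔ : insert v B ⊆ convexHull ℝ (insert v B) := subset_convexHull ℝ _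
  have hFne : (convexHull ℝ (insert v B) ∩ P).Nonempty := ⟨v, hBΔ (mem_insert v B), hvP⟩
  obtain ⟨f, hf, hFf⟩ := (isExposed_iff_exists_affineMap hFne).1 hF.1
  have hfB : ∀ x ∈ insert v B, 0 ≤ f x := fun x hx => hf x (hBΔ hx)
  have hfv : v ∈ f ⁻¹' {0} := (hFf.subset ⟨hBΔ (mem_insert v B), hvP⟩).2
  have hwall : convexHull ℝ (insert v B) ∩ P = convexHull ℝ (insert v (B ∩ f ⁻¹' {0})) := by
    rw [hFf, convexHull_inter_zero hfB, insert_inter_of_mem hfv]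
  obtain ⟨w, hw, hfw⟩ : ∃ w ∈ B, 0 < f w := by
    by_contra! hfw
    have hB0 : B ∩ f ⁻¹' {0} = B := inter_eq_left.2 fun x hx =>
      (hfw x hx).antisymm (hfB x (mem_insert_of_mem v hx))
    have hdim := hF.2
    rw [hwall, hB0] at hdim
    exact Nat.succ_ne_self _ hdim
  have hdim : polyDim B < polyDim (convexHull ℝ (insert v B)) :=
    (polyDim_convexHull_insert ⟨w, hw⟩ hv).symm ▸ Nat.lt_succ_self _
  have hchain := ih hdim (convexHull ℝ (insert w (B ∩ f ⁻¹' {0})))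
    (convexHull_min (insert_subset hw inter_subset_left) hB.convex)
    ((hB.inter_zero fun x hx => hfB x (mem_insert_of_mem v hx)).convexHull_insert w)
    ⟨w, subset_convexHull ℝ _ (mem_insert w _)⟩
  exact reflTransGen_pointExt_of_wall hP hv hvP hfv hw hfw (hwall ▸ inter_subset_right)
    (hwall ▸ hmeet) hchain

theorem PyramidalExt.reflTransGen_pointExt (h : PyramidalExt P Q) (hne : P.Nonempty)
    (ih : ∀ X B : Set E, IsPolytope X → IsPolytope B → X.Nonempty → X ⊆ B →
      polyDim B < polyDim Q → Relation.ReflTransGen PointExt X B) :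
    Relation.ReflTransGen PointExt P Q := by
  obtain ⟨hP, hQ, hPQ, ⟨B, v, hB, hv, hΔ⟩, hF⟩ := h
  have hPΔ := union_closure_sdiff hPQ hQ.isClosed
  rw [union_singleton] at hΔ
  rw [hΔ] at hF hPΔ
  have hBΔ : insert v B ⊆ convexHull ℝ (insert v B) := subset_convexHull ℝ _
  have hconv : Convex ℝ (P ∪ convexHull ℝ (insert v B)) := hPΔ.symm ▸ hQ.convex
  have hQB : convexHull ℝ (insert v (P ∪ B)) = Q := by
    rw [← union_insert, ← union_convexHull_of_convex hconv, hPΔ]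
  have hmeet : ∀ z ∈ insert v B, ∀ p ∈ P,
      ∃ q ∈ convexHull ℝ (insert v B) ∩ P, q ∈ segment ℝ p z := by
    intro z hz p hp
    rw [inter_comm]
    exact exists_mem_inter_segment hP.isClosed (hB.convexHull_insert v).isClosed hconv hp (hBΔ hz)
  by_cases hvP : v ∈ P
  · rw [insert_eq_of_mem (.inl hvP)] at hQB
    rw [← hQB]
    refine reflTransGen_pointExt_of_apex_mem hP.convex hB hv hvP hF
      (fun z hz => hmeet z (mem_insert_of_mem v hz)) fun hdim X hXB hX hXne => ?_
    exact ih X B hX hB hXne hXB (hdim.trans_le (polyDim_mono (hPΔ ▸ subset_union_right)))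
  · obtain ⟨p, hp⟩ := hne
    obtain ⟨q, hq, -⟩ := hmeet v (mem_insert v B) p hp
    have hFB := hF.eq_base_of_apex_notMem ⟨q, hq⟩ (fun h => hvP h.2) hB.convex hv
    have hBP : B ⊆ P := hFB ▸ inter_subset_right
    rw [← hQB, union_eq_left.2 hBP]
    exact .single (pointExt_of_base_subset hv hP.convex hBP (hFB ▸ hmeet v (mem_insert v B)))

/-- In dimension at most `d`, every inclusion of nonempty polytopes of `E` is a chain of pyramidal
extensions. -/
def PyramidalGrowthEqInclusion (E : Type*) [NormedAddCommGroup E] [NormedSpace ℝ E] (d : ℕ) :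
    Prop :=
  ∀ P Q : Set E, IsPolytope P → IsPolytope Q → P.Nonempty → polyDim P ≤ d → polyDim Q ≤ d →
    P ⊆ Q → Relation.ReflTransGen PyramidalExt P Q

theorem PyramidalGrowthEqInclusion.reflTransGen_pointExt {d : ℕ}
    (h : PyramidalGrowthEqInclusion E d) (hP : IsPolytope P) (hQ : IsPolytope Q)
    (hne : P.Nonempty) (hPQ : P ⊆ Q) (hd : polyDim Q ≤ d) :
    Relation.ReflTransGen PointExt P Q := by
  induction hn : polyDim Q using Nat.strong_induction_on generalizing P Q with
  | _ n ih =>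
    have hchain := h P Q hP hQ hne ((polyDim_mono hPQ).trans hd) hd hPQ
    clear hP hPQ
    induction hchain using Relation.ReflTransGen.head_induction_on with
    | refl => exact .refl
    | head hstep hchain ih' =>
      refine (PyramidalExt.reflTransGen_pointExt hstep hne fun X B hX hB hXne hXB hdim => ?_).trans
        (ih' (hne.mono hstep.2.2.1))
      have hBn : polyDim B < n :=
        hn ▸ hdim.trans_le (polyDim_mono (PyramidalExt.subset_of_reflTransGen hchain))
      exact ih _ hBn hX hB hXne hXB (hBn.le.trans (hn ▸ hd)) rfl

end PyramidalGrowth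

section Cone

open PointedCone Filter Topology Pointwise

variable {E : Type*} [AddCommGroup E] [Module ℝ E] {A C P T : Set E} {h : E →ₗ[ℝ] ℝ} {x : E}

theorem coneOf_eq_hull (hC : Convex ℝ C) (hne : C.Nonempty) : coneOf C = hull ℝ C := by
  refine Subset.antisymm ?_ fun x hx => ?_
  · rintro _ ⟨c, hc, x, hx, rfl⟩
    exact (hull ℝ C).smul_mem hc (subset_hull hx)
  · induction hx using Submodule.span_induction with
    | mem x hx => exact ⟨1, zero_le_one, x, hx, (one_smul ℝ x).symm⟩
    | zero => exact ⟨0, le_rfl, hne.some, hne.some_mem, (zero_smul ℝ _).symm⟩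
    | add _ _ _ _ hx hy =>
      obtain ⟨c, hc, x, hx, rfl⟩ := hx
      obtain ⟨d, hd, y, hy, rfl⟩ := hy
      obtain ⟨z, hz, hzxy⟩ : c • x + d • y ∈ (c + d) • C :=
        hC.add_smul hc hd ▸ add_mem_add (smul_mem_smul_set hx) (smul_mem_smul_set hy)
      exact ⟨c + d, add_nonneg hc hd, z, hz, hzxy.symm⟩
    | smul a _ _ hx =>
      obtain ⟨c, hc, x, hx, rfl⟩ := hx
      exact ⟨a * c, mul_nonneg a.2 hc, x, hx, (mul_smul _ _ _).symm⟩

theorem hull_convexHull (A : Set E) : hull ℝ (convexHull ℝ A) = hull ℝ A :=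
  le_antisymm (Submodule.span_le.2 (convexHull_min subset_hull (hull ℝ A).convex))
    (Submodule.span_mono (subset_convexHull ℝ A))

theorem hull_insert (z : E) (A : Set E) : hull ℝ (insert z A) = hull ℝ {z} ⊔ hull ℝ A :=
  Submodule.span_insert z A

theorem hull_insert_smul {ε : ℝ} (hε : 0 < ε) (z : E) (A : Set E) :
    hull ℝ (insert (ε • z) A) = hull ℝ (insert z A) := by
  refine le_antisymm (Submodule.span_le.2 (insert_subset ?_ ?_))
    (Submodule.span_le.2 (insert_subset ?_ ?_))
  · exact (hull ℝ _).smul_mem hε.le (subset_hull (mem_insert z A))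
  · exact (subset_insert z A).trans subset_hull
  · simpa [smul_smul, hε.ne'] using
      (hull ℝ _).smul_mem (inv_nonneg.2 hε.le) (subset_hull (mem_insert (ε • z) A))
  · exact (subset_insert _ A).trans subset_hull

theorem eventually_smul_mem (hT : Convex ℝ T) (h0 : (0 : E) ∈ T) (hx : x ∈ hull ℝ T) :
    ∀ᶠ ε : ℝ in 𝓝[>] 0, ε • x ∈ T := by
  rw [← SetLike.mem_coe, ← coneOf_eq_hull hT ⟨0, h0⟩] at hx
  obtain ⟨c, hc, y, hy, rfl⟩ := hx
  filter_upwards [Ioo_mem_nhdsGT (inv_pos.2 (add_pos_of_nonneg_of_pos hc one_pos))] with ε hε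
  rw [smul_smul]
  refine hT.smul_mem_of_zero_mem h0 hy ⟨mul_nonneg hε.1.le hc, ?_⟩
  have hεc : ε * (c + 1) < 1 := by
    rw [← lt_div_iff₀ (add_pos_of_nonneg_of_pos hc one_pos), one_div]
    exact hε.2
  linarith [hε.1]

/-- The cross-section of the cone spanned by `A` with the affine hyperplane `{h = 1}`. -/
def crossSection (h : E →ₗ[ℝ] ℝ) (A : Set E) : Set E :=
  {x | x ∈ hull ℝ A ∧ h x = 1}

theorem crossSection_mono (h' : A ⊆ C) : crossSection h A ⊆ crossSection h C :=
  fun _ hx => ⟨Submodule.span_mono h' hx.1, hx.2⟩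

theorem crossSection_eq_convexHull (hA : ∀ x ∈ A, h x = 1) :
    crossSection h A = convexHull ℝ A := by
  have hconv : ∀ x ∈ convexHull ℝ A, h x = 1 :=
    convexHull_min hA ((convex_singleton 1).linear_preimage h)
  refine Subset.antisymm (fun x ⟨hx, hx1⟩ => ?_) fun x hx =>
    ⟨hull_convexHull A ▸ subset_hull hx, hconv x hx⟩
  rcases A.eq_empty_or_nonempty with rfl | hne
  · simp_all
  rw [← hull_convexHull, ← SetLike.mem_coe,
    ← coneOf_eq_hull (convex_convexHull ℝ A) hne.convexHull] at hx
  obtain ⟨c, -, y, hy, rfl⟩ := hx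
  have hc : c = 1 := by simpa [hconv y hy] using hx1
  rwa [hc, one_smul]

theorem hull_image_inv_smul (hpos : ∀ x ∈ A, 0 < h x) :
    hull ℝ ((fun x => (h x)⁻¹ • x) '' A) = hull ℝ A := by
  refine le_antisymm (Submodule.span_le.2 ?_) (Submodule.span_le.2 fun x hx => ?_)
  · rintro _ ⟨x, hx, rfl⟩
    exact (hull ℝ A).smul_mem (inv_nonneg.2 (hpos x hx).le) (subset_hull hx)
  · have hx' := (hull ℝ _).smul_mem (hpos x hx).le
      (subset_hull (mem_image_of_mem (fun x => (h x)⁻¹ • x) hx))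
    simpa [smul_smul, (hpos x hx).ne'] using hx'

theorem map_eq_one_of_mem_image_inv_smul (hpos : ∀ x ∈ A, 0 < h x) :
    ∀ y ∈ (fun x => (h x)⁻¹ • x) '' A, h y = 1 := by
  rintro _ ⟨x, hx, rfl⟩
  simp [(hpos x hx).ne']

theorem crossSection_eq_convexHull_image (hpos : ∀ x ∈ A, 0 < h x) :
    crossSection h A = convexHull ℝ ((fun x => (h x)⁻¹ • x) '' A) := by
  rw [← crossSection_eq_convexHull (map_eq_one_of_mem_image_inv_smul hpos), crossSection,
    crossSection, hull_image_inv_smul hpos]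

theorem hull_crossSection (hpos : ∀ x ∈ A, x ≠ 0 → 0 < h x) :
    hull ℝ (crossSection h A) = hull ℝ A := by
  have hpos' : ∀ x ∈ A \ {0}, 0 < h x := fun x hx => hpos x hx.1 hx.2
  have hA : hull ℝ (A \ {0}) = hull ℝ A := Submodule.span_sdiff_singleton_zero
  rw [crossSection, ← hA, ← crossSection, crossSection_eq_convexHull_image hpos', hull_convexHull,
    hull_image_inv_smul hpos']

theorem crossSection_nonempty (hx : x ∈ A) (hpos : 0 < h x) : (crossSection h A).Nonempty :=
  ⟨(h x)⁻¹ • x, (hull ℝ A).smul_mem (inv_nonneg.2 hpos.le) (subset_hull hx), by simp [hpos.ne']⟩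

theorem IsPolytope.exists_finite_hull_eq (hP : IsPolytope P) :
    ∃ A ⊆ P \ {0}, A.Finite ∧ hull ℝ A = hull ℝ P := by
  obtain ⟨s, rfl⟩ := hP
  refine ⟨s \ {0}, sdiff_subset_sdiff_left (subset_convexHull ℝ _), s.finite_toSet.sdiff, ?_⟩
  rw [hull_convexHull]
  exact Submodule.span_sdiff_singleton_zero

theorem IsPolytope.isPolytope_crossSection (hP : IsPolytope P) (hpos : ∀ x ∈ P, x ≠ 0 → 0 < h x) :
    IsPolytope (crossSection h P) := by
  obtain ⟨A, hAP, hA, hhull⟩ := hP.exists_finite_hull_eq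
  rw [crossSection, ← hhull, ← crossSection,
    crossSection_eq_convexHull_image fun x hx => hpos x (hAP hx).1 (hAP hx).2]
  exact ⟨(hA.image _).toFinset, by rw [Finite.coe_toFinset]⟩

theorem map_pos_of_mem_hull (hpos : ∀ x ∈ A, 0 < h x) (hx : x ∈ hull ℝ A) (hx0 : x ≠ 0) :
    0 < h x := by
  refine Or.resolve_left ?_ hx0
  clear hx0
  induction hx using Submodule.span_induction with
  | mem x hx => exact .inr (hpos x hx)
  | zero => exact .inl rfl
  | add x y _ _ hx hy =>
    rcases hx with rfl | hx
    · rwa [zero_add]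
    rcases hy with rfl | hy
    · exact .inr (by rwa [add_zero])
    · exact .inr (by simpa using add_pos hx hy)
  | smul a x _ hx =>
    rcases hx with rfl | hx
    · exact .inl (smul_zero a)
    rcases eq_or_ne a 0 with rfl | ha
    · exact .inl (zero_smul _ x)
    · have ha' : 0 < (a : ℝ) := a.2.lt_of_ne' (Subtype.coe_ne_coe.2 ha)
      exact .inr ((map_smul h (a : ℝ) x).symm ▸ mul_pos ha' hx)

theorem IsPolytope.exists_forall_map_pos {E : Type*} [NormedAddCommGroup E] [NormedSpace ℝ E]
    {P : Set E} (hP : IsPolytope P) (h0 : (0 : E) ∈ extremePoints ℝ P) :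
    ∃ h : E →ₗ[ℝ] ℝ, ∀ x ∈ P, x ≠ 0 → 0 < h x := by
  obtain ⟨A, hAP, hA, hhull⟩ := hP.exists_finite_hull_eq
  have h0A : (0 : E) ∉ convexHull ℝ A := fun h =>
    (convexHull_min hAP (hP.convex.mem_extremePoints_iff_convex_sdiff.1 h0).2 h).2 rfl
  obtain ⟨h, u, hu0, hu⟩ := geometric_hahn_banach_point_closed (convex_convexHull ℝ A)
    (hA.isCompact_convexHull ℝ).isClosed h0A
  rw [map_zero] at hu0
  refine ⟨h.toLinearMap, fun x hx => map_pos_of_mem_hull (A := A) (fun y hy => ?_) ?_⟩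
  · exact hu0.trans (hu y (subset_convexHull ℝ A hy))
  · exact hhull ▸ subset_hull hx

theorem hull_subset_affineSpan (h0 : (0 : E) ∈ A) : (hull ℝ A : Set E) ⊆ affineSpan ℝ A := by
  rw [← insert_eq_of_mem h0, affineSpan_insert_zero]
  simp

theorem polyDim_crossSection_lt [FiniteDimensional ℝ E] (h0 : (0 : E) ∈ A)
    (hne : (crossSection h A).Nonempty) : polyDim (crossSection h A) < polyDim A := by
  have h0Q : (0 : E) ∉ affineSpan ℝ (crossSection h A) := fun h0Q => by
    have := map_eq_zero_of_mem_affineSpan (f := h.toAffineMap - AffineMap.const ℝ E 1)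
      (fun x hx => by simp [hx.2]) h0Q
    simp at this
  rw [← Nat.succ_le_iff, Nat.succ_eq_add_one, ← polyDim_convexHull_insert hne h0Q]
  refine polyDim_le_of_subset_affineSpan (convexHull_min (insert_subset ?_ ?_)
    (AffineSubspace.convex _))
  · exact subset_affineSpan ℝ A h0
  · exact fun x hx => hull_subset_affineSpan h0 hx.1

end Cone

section Lift

open PointedCone Filter Topology

variable {E : Type*} [AddCommGroup E] [Module ℝ E] {Q S T X : Set E} {g h : E →ₗ[ℝ] ℝ} {x z : E}

theorem exists_linearMap_eqOn (f : E →ᵃ[ℝ] ℝ) (h : E →ₗ[ℝ] ℝ) :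
    ∃ g : E →ₗ[ℝ] ℝ, ∀ x, h x = 1 → f x = g x := by
  refine ⟨f.linear + f 0 • h, fun x hx => ?_⟩
  have hf : f x = f.linear x + f 0 := congrFun (AffineMap.decomp f) x
  simp [hf, hx]

theorem IsSeenThrough.exists_add_smul_mem_hull (hX : IsSeenThrough g.toAffineMap z X)
    (hx : x ∈ hull ℝ X) : ∃ b : ℝ, 0 ≤ b ∧ x + b • z ∈ hull ℝ X ∧ g (x + b • z) = 0 := by
  induction hx using Submodule.span_induction with
  | mem x hx =>
    obtain ⟨q, ⟨hq, hgq⟩, r, hr, rfl⟩ := hX.2 hx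
    have hrq : AffineMap.lineMap z q r + (r - 1) • z = r • q := by
      rw [AffineMap.lineMap_apply_module]
      module
    refine ⟨r - 1, sub_nonneg.2 hr, ?_, ?_⟩ <;> rw [hrq]
    · exact (hull ℝ X).smul_mem (zero_le_one.trans hr) (subset_hull hq)
    · simpa using Or.inr hgq
  | zero => exact ⟨0, le_rfl, by simp, by simp⟩
  | add x y _ _ hx hy =>
    obtain ⟨b, hb, hbX, hgb⟩ := hx
    obtain ⟨c, hc, hcX, hgc⟩ := hy
    have hadd : x + y + (b + c) • z = (x + b • z) + (y + c • z) := by module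
    exact ⟨b + c, add_nonneg hb hc, hadd ▸ add_mem hbX hcX, by
      rw [hadd, map_add, hgb, hgc, add_zero]⟩
  | smul a x _ hx =>
    obtain ⟨b, hb, hbX, hgb⟩ := hx
    have hsmul : a • x + (a * b : ℝ) • z = (a : ℝ) • (x + b • z) := by
      rw [smul_add, smul_smul, Nonneg.coe_smul]
    exact ⟨a * b, mul_nonneg a.2 hb, hsmul ▸ (hull ℝ X).smul_mem a.2 hbX, by
      rw [hsmul, map_smul, hgb, smul_zero]⟩

theorem eventually_mem_shadow_smul (hT : Convex ℝ T) (h0 : (0 : E) ∈ T) (hx : x ∈ T) {b : ℝ}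
    (hb : 0 ≤ b) (hbT : x + b • z ∈ hull ℝ T) (hg : g (x + b • z) = 0) :
    ∀ᶠ ε : ℝ in 𝓝[>] 0, x ∈ shadow (ε • z) (T ∩ g ⁻¹' {0}) := by
  rcases hb.eq_or_lt with rfl | hb
  · exact .of_forall fun ε => subset_shadow ⟨hx, by simpa using hg⟩
  have hy : b⁻¹ • (x + b • z) ∈ hull ℝ T := (hull ℝ T).smul_mem (inv_nonneg.2 hb.le) hbT
  filter_upwards [eventually_smul_mem hT h0 hy, self_mem_nhdsWithin] with ε hεT hε
  rw [mem_Ioi] at hε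
  have hqT : (ε / (ε + b)) • (x + b • z) ∈ T := by
    have := hT.smul_mem_of_zero_mem h0 hεT (t := b / (ε + b))
      ⟨by positivity, (div_le_one (by positivity)).2 (by linarith)⟩
    convert this using 1
    match_scalars <;> field_simp
  have hgq : g ((ε / (ε + b)) • (x + b • z)) = 0 := by rw [map_smul, hg, smul_zero]
  refine ⟨_, ⟨hqT, hgq⟩, 1 + b / ε, le_add_of_nonneg_right (by positivity), ?_⟩
  simp only [AffineMap.lineMap_apply_module]
  match_scalars <;> field_simp
  ring

theorem IsSeenThrough.eventually_smul (hX : IsSeenThrough g.toAffineMap z X) (hT : IsPolytope T)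
    (h0 : (0 : E) ∈ T) (hTX : hull ℝ T = hull ℝ X) :
    ∀ᶠ ε : ℝ in 𝓝[>] 0, IsSeenThrough g.toAffineMap (ε • z) T := by
  obtain ⟨t, rfl⟩ := hT
  have hshadow : ∀ᶠ ε : ℝ in 𝓝[>] 0, ∀ x ∈ t,
      x ∈ shadow (ε • z) (convexHull ℝ (t : Set E) ∩ g ⁻¹' {0}) := by
    refine (eventually_all_finset t).2 fun x hx => ?_
    have hxT := subset_convexHull ℝ (t : Set E) hx
    obtain ⟨b, hb, hbX, hgb⟩ := hX.exists_add_smul_mem_hull (hTX ▸ subset_hull hxT)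
    exact eventually_mem_shadow_smul (convex_convexHull ℝ _) h0 hxT hb (hTX ▸ hbX) hgb
  filter_upwards [hshadow, self_mem_nhdsWithin] with ε hεt hε
  refine .of_subset_shadow ?_ hεt
  simpa using mul_pos hε hX.1

theorem exists_reflTransGen_pointExt_hull_eq (hS : Convex ℝ S) (h0S : (0 : E) ∈ S)
    (hXQ : Relation.ReflTransGen PointExt X Q) (hQ : Q ⊆ crossSection h S) (hT : IsPolytope T)
    (h0T : (0 : E) ∈ T) (hTS : T ⊆ S) (hTX : hull ℝ T = hull ℝ X) :
    ∃ T', Relation.ReflTransGen PointExt T T' ∧ IsPolytope T' ∧ T' ⊆ S ∧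
      hull ℝ T' = hull ℝ Q := by
  induction hXQ with
  | refl => exact ⟨T, .refl, hT, hTS, hTX⟩
  | tail _ hstep ih =>
    obtain ⟨T', hTT', hT', hT'S, hhull⟩ := ih (hstep.subset.trans hQ)
    obtain ⟨z, f, hf, rfl⟩ := hstep
    have hzS := hQ (subset_convexHull ℝ _ (mem_insert z _))
    obtain ⟨g, hg⟩ := exists_linearMap_eqOn f h
    have hgz := hf.congr (g := g.toAffineMap) fun x hx => hg x (hQ (subset_convexHull ℝ _ hx)).2
    have h0T' : (0 : E) ∈ T' := PointExt.subset_of_reflTransGen hTT' h0T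
    have hpos : ∀ᶠ ε : ℝ in 𝓝[>] 0, 0 < ε := self_mem_nhdsWithin
    obtain ⟨ε, hε, hεS, hεT'⟩ := (hpos.and <| (eventually_smul_mem hS h0S hzS.1).and
      (hgz.eventually_smul hT' h0T' hhull)).exists
    refine ⟨_, hTT'.tail ⟨ε • z, _, hεT', rfl⟩, hT'.convexHull_insert _,
      convexHull_min (insert_subset hεS hT'S) hS, ?_⟩
    rw [hull_convexHull, hull_convexHull, hull_insert_smul hε, hull_insert, hhull, ← hull_insert]

end Lift

section CornerCone

open PointedCone

variable {E : Type*} [NormedAddCommGroup E] [NormedSpace ℝ E] [FiniteDimensional ℝ E]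
  {R S T : Set E} {h : E →ₗ[ℝ] ℝ} {d : ℕ}

theorem exists_seq_pyramidalExt (hR : IsPolytope R) (hne : R.Nonempty)
    (h : Relation.ReflTransGen PointExt R T) :
    ∃ (m : ℕ) (z : ℕ → E), (∀ j < m, z j ∈ T) ∧
      (∀ j < m, PyramidalExt (convexHull ℝ (R ∪ z '' Iio j))
        (convexHull ℝ (R ∪ z '' Iio (j + 1)))) ∧
      convexHull ℝ (R ∪ z '' Iio m) = T ∧ IsPolytope T := by
  induction h with
  | refl => exact ⟨0, 0, by simp, by simp, by simp [hR.convex.convexHull_eq], hR⟩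
  | @tail T T' hRT hstep ih =>
    obtain ⟨m, z, hzT, hz, hzm, hT⟩ := ih
    have hTne : T.Nonempty := hne.mono (PointExt.subset_of_reflTransGen hRT)
    have hTT' := hstep.subset
    obtain ⟨w, f, hf, rfl⟩ := hstep
    have himage {j : ℕ} (hj : j ≤ m) : Function.update z m w '' Iio j = z '' Iio j :=
      image_congr fun i hi => Function.update_of_ne (hi.trans_le hj).ne w z
    have hlast : convexHull ℝ (R ∪ Function.update z m w '' Iio (m + 1)) =
        convexHull ℝ (insert w T) := by
      rw [← Order.succ_eq_add_one, Order.Iio_succ_eq_insert, image_insert_eq,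
        Function.update_self, himage le_rfl, union_insert, ← convexHull_insert_convexHull, hzm]
    refine ⟨m + 1, Function.update z m w, fun j hj => ?_, fun j hj => ?_, hlast,
      hT.convexHull_insert w⟩
    · rcases Nat.lt_succ_iff_lt_or_eq.1 hj with hj | rfl
      · rw [Function.update_of_ne hj.ne]
        exact hTT' (hzT j hj)
      · rw [Function.update_self]
        exact subset_convexHull ℝ _ (mem_insert w T)
    · rcases Nat.lt_succ_iff_lt_or_eq.1 hj with hj | rfl
      · rw [himage hj.le, himage hj]
        exact hz j hj
      · rw [hlast, himage le_rfl, hzm]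
        exact hf.pyramidalExt hT hTne

theorem PyramidalGrowthEqInclusion.exists_hull_eq_of_map_pos (hd : PyramidalGrowthEqInclusion E d)
    (hR : IsPolytope R) (hS : IsPolytope S) (hdS : polyDim S ≤ d + 1) (hRS : R ⊆ S)
    (h0 : (0 : E) ∈ R) (hpos : ∀ x ∈ S, x ≠ 0 → 0 < h x) (hR0 : ∃ x ∈ R, x ≠ 0) :
    ∃ T ⊆ S, Relation.ReflTransGen PointExt R T ∧ hull ℝ T = hull ℝ S := by
  have hposR : ∀ x ∈ R, x ≠ 0 → 0 < h x := fun x hx => hpos x (hRS hx)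
  have hne : (crossSection h R).Nonempty :=
    let ⟨x, hx, hx0⟩ := hR0
    crossSection_nonempty hx (hposR x hx hx0)
  have hsub : crossSection h R ⊆ crossSection h S := crossSection_mono hRS
  have hdim : polyDim (crossSection h S) ≤ d :=
    Nat.lt_succ_iff.1 ((polyDim_crossSection_lt (hRS h0) (hne.mono hsub)).trans_le hdS)
  have hchain := hd.reflTransGen_pointExt (hR.isPolytope_crossSection hposR)
    (hS.isPolytope_crossSection hpos) hne hsub hdim
  obtain ⟨T, hRT, -, hTS, hhull⟩ := exists_reflTransGen_pointExt_hull_eq hS.convex (hRS h0) hchain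
    subset_rfl hR h0 hRS (hull_crossSection hposR).symm
  exact ⟨T, hTS, hRT, hhull.trans (hull_crossSection hpos)⟩

theorem PyramidalGrowthEqInclusion.exists_hull_eq (hd : PyramidalGrowthEqInclusion E d)
    (hR : IsPolytope R) (hS : IsPolytope S) (hdS : polyDim S ≤ d + 1) (hRS : R ⊆ S)
    (h0R : (0 : E) ∈ R) (h0S : (0 : E) ∈ extremePoints ℝ S) :
    ∃ T ⊆ S, Relation.ReflTransGen PointExt R T ∧ hull ℝ T = hull ℝ S := by
  obtain ⟨h, hpos⟩ := hS.exists_forall_map_pos h0S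
  by_cases hS0 : S ⊆ {0}
  · exact ⟨R, hRS, .refl, by rw [hRS.antisymm (hS0.trans (singleton_subset_iff.2 h0R))]⟩
  obtain ⟨w, hwS, hw0⟩ := not_subset.1 hS0
  by_cases hR0 : R ⊆ {0}
  · have hfirst : PointExt R (convexHull ℝ (insert w R)) :=
      ⟨w, h.toAffineMap, .of_map_eq_zero (hpos w hwS hw0) fun x hx =>
        hR0 hx ▸ map_zero h, rfl⟩
    obtain ⟨T, hTS, hchain, hhull⟩ := hd.exists_hull_eq_of_map_pos (hR.convexHull_insert w) hS hdS
      (convexHull_min (insert_subset hwS hRS) hS.convex) (hfirst.subset h0R) hpos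
      ⟨w, subset_convexHull ℝ _ (mem_insert w R), hw0⟩
    exact ⟨T, hTS, .head hfirst hchain, hhull⟩
  · exact hd.exists_hull_eq_of_map_pos hR hS hdS hRS h0R hpos (not_subset.1 hR0)

theorem stmt15_general (hR : IsPolytope R) (hS : IsPolytope S) (hdS : polyDim S ≤ d + 1)
    (hRS : R ⊆ S) (h0R : (0 : E) ∈ R) (h0S : (0 : E) ∈ extremePoints ℝ S)
    (hd : PyramidalGrowthEqInclusion E d) :
    ∃ (m : ℕ) (z : ℕ → E),
      (∀ j < m, z j ∈ S) ∧
      (∀ j < m, PyramidalExt (convexHull ℝ (R ∪ z '' Iio j))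
        (convexHull ℝ (R ∪ z '' Iio (j + 1)))) ∧
      coneOf (convexHull ℝ (R ∪ z '' Iio m)) = coneOf S := by
  obtain ⟨T, hTS, hchain, hhull⟩ := hd.exists_hull_eq hR hS hdS hRS h0R h0S
  obtain ⟨m, z, hzT, hz, rfl, hT⟩ := exists_seq_pyramidalExt hR ⟨0, h0R⟩ hchain
  refine ⟨m, z, fun j hj => hTS (hzT j hj), hz, ?_⟩
  rw [coneOf_eq_hull hT.convex ⟨0, PointExt.subset_of_reflTransGen hchain h0R⟩, hhull,
    coneOf_eq_hull hS.convex ⟨0, h0S.1⟩]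

end CornerCone

theorem stmt15 {d : ℕ} (R S : Set (EuclideanSpace ℝ (Fin (d + 1))))
    (hR : IsPolytope R) (hS : IsPolytope S)
    (hdR : polyDim R = d + 1) (hdS : polyDim S = d + 1)
    (hRS : R ⊆ S)
    (h0R : (0 : EuclideanSpace ℝ (Fin (d + 1))) ∈ Set.extremePoints ℝ R)
    (h0S : (0 : EuclideanSpace ℝ (Fin (d + 1))) ∈ Set.extremePoints ℝ S)
    -- pyramidal growth coincides with inclusion in dimension d
    (hind : ∀ P Q : Set (EuclideanSpace ℝ (Fin (d + 1))),
      IsPolytope P → IsPolytope Q → P.Nonempty → polyDim P ≤ d → polyDim Q ≤ d →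
      P ⊆ Q → Relation.ReflTransGen PyramidalExt P Q) :
    ∃ (m : ℕ) (z : ℕ → EuclideanSpace ℝ (Fin (d + 1))),
      (∀ j < m, z j ∈ S) ∧
      (∀ j < m, PyramidalExt (convexHull ℝ (R ∪ z '' Set.Iio j))
        (convexHull ℝ (R ∪ z '' Set.Iio (j + 1)))) ∧
      coneOf (convexHull ℝ (R ∪ z '' Set.Iio m)) = coneOf S :=
  stmt15_general hR hS hdS.le hRS h0R.1 h0S hind
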